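/- Let Γ₊ = {κ ∈ ℝⁿ : κᵢ > 0 ∀i}, U ⊆ ℝ^m open with (p₁(κ),…,p_m(κ)) ∈ U for all κ ∈ Γ₊, ψ : U → ℝ be C², and suppose f(κ) = ψ(p₁(κ),…,p_m(κ)) is positive, strictly monotone (∂f/∂κᵢ > 0 on Γ₊), homogeneous of degree one (f(λκ) = λf(κ) for λ > 0), and inverse concave, i.e. the function f̃(κ) = 1/f(κ₁⁻¹,…,κₙ⁻¹) is concave on Γ₊. Let A be an n×n real matrix, diagonalisable with eigenvalues κ ∈ Γ₊, let g be symmetric positive definite with gA = Aᵀg, and set F(A) = ψ(P₁(A),…,P_m(A)). Then for every n×n real matrix η with gη = ηᵀg (η is g-selfadjoint), d²F(A)(η,η) + 2·dF(A)(η·A⁻¹·η) ≥ 2·F(A)⁻¹·(dF(A)η)². -/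

import Mathlib

open Matrix

attribute [local instance] Matrix.normedAddCommGroup Matrix.normedSpace

/-- `P_k(A) = trace (A ^ k)`, bundled as the vector `(P₁(A), …, P_m(A))`. -/
noncomputable def Pvec (n m : ℕ) (A : Matrix (Fin n) (Fin n) ℝ) : Fin m → ℝ :=
  fun l => (A ^ ((l : ℕ) + 1)).trace

/-- `p_k(κ) = ∑ i, κ i ^ k`, bundled as the vector `(p₁(κ), …, p_m(κ))`. -/
def pvec (n m : ℕ) (κ : Fin n → ℝ) : Fin m → ℝ :=
  fun l => ∑ i, κ i ^ ((l : ℕ) + 1)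

/-!
The curve `Y(t) = (A⁻¹ - t • A⁻¹ηA⁻¹)⁻¹` satisfies `Y(0) = A`, `Y'(0) = η` and `Y''(0) = 2ηA⁻¹η`,
so the inequality says exactly that `1 / F(Y(t))` has nonpositive second derivative at `t = 0`.
Along this curve `1 / F(Y(t)) = Φ(A⁻¹ - t • A⁻¹ηA⁻¹)` with `Φ(X) = 1 / F(X⁻¹)`, so it suffices that
`Φ` is concave on the matrices `X` for which `g * X` is positive definite. Writing `g = Rᵀ * R`,
conjugation by `R` maps these onto the positive definite matrices. There Davis' theorem applies: the
diagonal of a symmetric matrix is a doubly stochastic image of its eigenvalues, so by Birkhoff's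
theorem a conjugation-invariant function that is concave on diagonal matrices does not decrease when
a matrix is replaced by its diagonal in any orthonormal basis; use an eigenbasis of `a • X + b • Y`.
-/

open Filter Topology

section Calculus

theorem nonpos_of_concaveOn_of_hasDerivAt_deriv {s : Set ℝ} {G G' : ℝ → ℝ} {G'' x : ℝ}
    (hG : ConcaveOn ℝ s G) (hs : s ∈ 𝓝 x) (hG' : ∀ᶠ y in 𝓝 x, HasDerivAt G (G' y) y)
    (hG'' : HasDerivAt G' G'' x) : G'' ≤ 0 := by
  obtain ⟨ε, hε, hball⟩ := Metric.mem_nhds_iff.1 (inter_mem hs hG')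
  have hconc : ConcaveOn ℝ (Metric.ball x ε) G :=
    hG.subset (fun y hy => (hball hy).1) (convex_ball x ε)
  have hanti : AntitoneOn (deriv G) (Metric.ball x ε) :=
    hconc.antitoneOn_deriv fun y hy => (hball hy).2.differentiableAt
  have hderiv : HasDerivAt (deriv G) G'' x :=
    hG''.congr_of_eventuallyEq (hG'.mono fun y hy => hy.deriv)
  have hacc : AccPt x (𝓟 (Metric.ball x ε)) :=
    (Metric.isOpen_ball.uniqueDiffWithinAt (𝕜 := ℝ) (Metric.mem_ball_self hε)).accPt
  exact hderiv.hasDerivWithinAt.nonpos_of_antitoneOn hacc hanti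

theorem two_mul_inv_mul_sq_le_of_concaveOn_inv {s : Set ℝ} {h h' : ℝ → ℝ} {h'' x : ℝ}
    (hconc : ConcaveOn ℝ s fun y => (h y)⁻¹) (hs : s ∈ 𝓝 x)
    (hh' : ∀ᶠ y in 𝓝 x, HasDerivAt h (h' y) y) (hh'' : HasDerivAt h' h'' x) (hx : h x ≠ 0) :
    2 * (h x)⁻¹ * h' x ^ 2 ≤ h'' := by
  have hne : ∀ᶠ y in 𝓝 x, h y ≠ 0 := hh'.self_of_nhds.continuousAt.eventually_ne hx
  have hinv' : ∀ᶠ y in 𝓝 x, HasDerivAt (fun y => (h y)⁻¹) (-h' y / h y ^ 2) y := by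
    filter_upwards [hh', hne] with y hy hy0 using hy.fun_inv hy0
  have hinv'' := hh''.fun_neg.fun_div (hh'.self_of_nhds.fun_pow 2) (pow_ne_zero 2 hx)
  have hle := nonpos_of_concaveOn_of_hasDerivAt_deriv hconc hs hinv' hinv''
  have hfactor : (-h'' * h x ^ 2 - -h' x * (↑(2 : ℕ) * h x ^ (2 - 1) * h' x)) / (h x ^ 2) ^ 2 =
      (2 * (h x)⁻¹ * h' x ^ 2 - h'') / h x ^ 2 := by
    field_simp
    ring
  rw [hfactor] at hle
  by_contra! hlt
  exact hle.not_gt (div_pos (sub_pos.2 hlt) (by positivity))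

theorem hasDerivAt_fderiv_apply {𝕜 E G : Type*} [RCLike 𝕜] [NormedAddCommGroup E]
    [NormedSpace 𝕜 E] [NormedAddCommGroup G] [NormedSpace 𝕜 G] {F : E → G} {Y Y' : 𝕜 → E}
    {Y'' : E} {t : 𝕜} (hF : ContDiffAt 𝕜 2 F (Y t)) (hY : HasDerivAt Y (Y' t) t)
    (hY' : HasDerivAt Y' Y'' t) :
    HasDerivAt (fun s => fderiv 𝕜 F (Y s) (Y' s))
      (fderiv 𝕜 (fderiv 𝕜 F) (Y t) (Y' t) (Y' t) + fderiv 𝕜 F (Y t) Y'') t := by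
  have hdF : DifferentiableAt 𝕜 (fderiv 𝕜 F) (Y t) :=
    (hF.fderiv_right (m := 1) (by norm_num)).differentiableAt (by norm_num)
  exact (hdF.hasFDerivAt.comp_hasDerivAt t hY).clm_apply hY'

theorem two_mul_inv_mul_sq_fderiv_le_of_concaveOn_inv_comp {E : Type*} [NormedAddCommGroup E]
    [NormedSpace ℝ E] {F : E → ℝ} {Y Y' : ℝ → E} {Y'' : E} {s : Set ℝ} {x : ℝ}
    (hconc : ConcaveOn ℝ s fun t => (F (Y t))⁻¹) (hs : s ∈ 𝓝 x) (hF : ContDiffAt ℝ 2 F (Y x))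
    (hFY : F (Y x) ≠ 0) (hY : ∀ᶠ t in 𝓝 x, HasDerivAt Y (Y' t) t) (hY' : HasDerivAt Y' Y'' x) :
    2 * (F (Y x))⁻¹ * fderiv ℝ F (Y x) (Y' x) ^ 2 ≤
      fderiv ℝ (fderiv ℝ F) (Y x) (Y' x) (Y' x) + fderiv ℝ F (Y x) Y'' := by
  have hFdiff : ∀ᶠ X in 𝓝 (Y x), DifferentiableAt ℝ F X :=
    (hF.eventually (by simp)).mono fun X hX => hX.differentiableAt (by norm_num)
  have hFY' : ∀ᶠ t in 𝓝 x, HasDerivAt (fun t => F (Y t)) (fderiv ℝ F (Y t) (Y' t)) t := by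
    filter_upwards [hY, hY.self_of_nhds.continuousAt.eventually hFdiff] with t hYt hFt
    exact hFt.hasFDerivAt.comp_hasDerivAt t hYt
  exact two_mul_inv_mul_sq_le_of_concaveOn_inv hconc hs hFY'
    (hasDerivAt_fderiv_apply hF hY.self_of_nhds hY') hFY

theorem concaveOn_comp_sub_smul {𝕜 E β : Type*} [Field 𝕜] [LinearOrder 𝕜] [AddCommGroup E]
    [Module 𝕜 E] [AddCommMonoid β] [PartialOrder β] [SMul 𝕜 β] {s : Set E} {φ : E → β}
    (hφ : ConcaveOn 𝕜 s φ) (x v : E) :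
    ConcaveOn 𝕜 {t : 𝕜 | x - t • v ∈ s} fun t => φ (x - t • v) := by
  have hline (t : 𝕜) : AffineMap.lineMap x (x - v) t = x - t • v := by
    simp [AffineMap.lineMap_apply_module', sub_eq_neg_add]
  simpa only [Set.preimage, Function.comp_def, hline] using
    hφ.comp_affineMap (AffineMap.lineMap x (x - v))

end Calculus

section InverseCurve

section NormedAlgebra

variable {𝕜 R : Type*} [NontriviallyNormedField 𝕜] [NormedRing R] [NormedAlgebra 𝕜 R]
  [HasSummableGeomSeries R] {a c : R} {t : 𝕜}

theorem hasDerivAt_ringInverse_sub_smul (h : IsUnit (a - t • c)) :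
    HasDerivAt (fun s : 𝕜 => Ring.inverse (a - s • c))
      (Ring.inverse (a - t • c) * c * Ring.inverse (a - t • c)) t := by
  have hline : HasDerivAt (fun s : 𝕜 => a - s • c) (-c) t := by
    simpa using ((hasDerivAt_id t).smul_const c).const_sub a
  obtain ⟨u, hu⟩ := h
  have hinv := hasFDerivAt_ringInverse (𝕜 := 𝕜) u
  rw [hu] at hinv
  refine (hinv.comp_hasDerivAt t hline).congr_deriv ?_
  simp [← hu]

theorem hasDerivAt_ringInverse_mul_mul_ringInverse_sub_smul (h : IsUnit (a - t • c)) :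
    HasDerivAt (fun s : 𝕜 => Ring.inverse (a - s • c) * c * Ring.inverse (a - s • c))
      ((2 : 𝕜) • (Ring.inverse (a - t • c) * c * Ring.inverse (a - t • c) * c *
        Ring.inverse (a - t • c))) t := by
  have hY := hasDerivAt_ringInverse_sub_smul h
  refine ((hY.mul_const c).fun_mul hY).congr_deriv ?_
  simp only [two_smul, mul_assoc]

end NormedAlgebra

variable {n : Type*} [Fintype n] [DecidableEq n]

theorem eventually_isUnit_sub_smul {X : Matrix n n ℝ} (hX : IsUnit X) (C : Matrix n n ℝ) :
    ∀ᶠ t : ℝ in 𝓝 0, IsUnit (X - t • C) := by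
  have hdet : Continuous fun t : ℝ => (X - t • C).det := by fun_prop
  have hdet0 : (X - (0 : ℝ) • C).det ≠ 0 := by simpa [isUnit_iff_isUnit_det] using hX
  filter_upwards [hdet.continuousAt.eventually_ne hdet0] with t ht
  simpa [isUnit_iff_isUnit_det] using ht

theorem hasDerivAt_matrix_inv_sub_smul {X C : Matrix n n ℝ} {t : ℝ} (h : IsUnit (X - t • C)) :
    HasDerivAt (fun s : ℝ => (X - s • C)⁻¹) ((X - t • C)⁻¹ * C * (X - t • C)⁻¹) t := by
  simp only [nonsing_inv_eq_ringInverse]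
  -- The operator norm makes matrices a Banach algebra and induces the same topology.
  exact @hasDerivAt_ringInverse_sub_smul ℝ (Matrix n n ℝ) _ Matrix.linftyOpNormedRing
    Matrix.linftyOpNormedAlgebra inferInstance X C t h

theorem hasDerivAt_matrix_inv_mul_mul_inv_sub_smul {X C : Matrix n n ℝ} {t : ℝ}
    (h : IsUnit (X - t • C)) :
    HasDerivAt (fun s : ℝ => (X - s • C)⁻¹ * C * (X - s • C)⁻¹)
      ((2 : ℝ) • ((X - t • C)⁻¹ * C * (X - t • C)⁻¹ * C * (X - t • C)⁻¹)) t := by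
  simp only [nonsing_inv_eq_ringInverse]
  exact @hasDerivAt_ringInverse_mul_mul_ringInverse_sub_smul ℝ (Matrix n n ℝ) _
    Matrix.linftyOpNormedRing Matrix.linftyOpNormedAlgebra inferInstance X C t h

theorem two_mul_inv_mul_sq_fderiv_le_of_concaveOn_inv_comp_inv {F : Matrix n n ℝ → ℝ}
    {A η : Matrix n n ℝ} {s : Set ℝ} (hA : IsUnit A) (hF : ContDiffAt ℝ 2 F A) (hFA : F A ≠ 0)
    (hs : s ∈ 𝓝 0) (hconc : ConcaveOn ℝ s fun t => (F (A⁻¹ - t • (A⁻¹ * η * A⁻¹))⁻¹)⁻¹) :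
    2 * (F A)⁻¹ * fderiv ℝ F A η ^ 2 ≤
      fderiv ℝ (fderiv ℝ F) A η η + 2 * fderiv ℝ F A (η * A⁻¹ * η) := by
  have hdet : IsUnit A.det := (isUnit_iff_isUnit_det A).1 hA
  have hunit := eventually_isUnit_sub_smul (isUnit_nonsing_inv_iff.2 hA) (A⁻¹ * η * A⁻¹)
  have hderiv : A * (A⁻¹ * η * A⁻¹) * A = η := by
    simp only [mul_assoc, nonsing_inv_mul _ hdet, mul_one, mul_nonsing_inv_cancel_left _ _ hdet]
  have hderiv2 : η * (A⁻¹ * η * A⁻¹) * A = η * A⁻¹ * η := by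
    simp only [mul_assoc, nonsing_inv_mul _ hdet, mul_one]
  have hmain := two_mul_inv_mul_sq_fderiv_le_of_concaveOn_inv_comp hconc hs
    (by simpa [nonsing_inv_nonsing_inv A hdet] using hF)
    (by simpa [nonsing_inv_nonsing_inv A hdet] using hFA)
    (hunit.mono fun t ht => hasDerivAt_matrix_inv_sub_smul ht)
    (hasDerivAt_matrix_inv_mul_mul_inv_sub_smul hunit.self_of_nhds)
  simp only [zero_smul, sub_zero, nonsing_inv_nonsing_inv A hdet, hderiv, hderiv2, map_smul,
    smul_eq_mul] at hmain
  exact hmain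

end InverseCurve

section Conjugation

theorem isConj_mul_mul_of_mul_eq_one {M : Type*} [Monoid M] {p q : M} (hpq : p * q = 1)
    (hqp : q * p = 1) (x : M) : IsConj x (p * x * q) :=
  ⟨⟨p, q, hpq, hqp⟩, by simp [SemiconjBy, mul_assoc, hqp]⟩

variable {n α : Type*} [Fintype n] [DecidableEq n]

theorem isConj_matrix_inv [CommRing α] {X Y : Matrix n n α} (h : IsConj X Y) :
    IsConj X⁻¹ Y⁻¹ := by
  obtain ⟨c, hc⟩ := h
  have hY : Y⁻¹ = c * X⁻¹ * (c⁻¹ : (Matrix n n α)ˣ) := by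
    rw [c.eq_mul_inv_iff_mul_eq.2 hc.symm, Matrix.mul_inv_rev, Matrix.mul_inv_rev,
      ← coe_units_inv, ← coe_units_inv, inv_inv, mul_assoc]
  exact hY ▸ isConj_mul_mul_of_mul_eq_one c.mul_inv c.inv_mul X⁻¹

theorem inv_diagonal_of_forall_ne_zero [Field α] {x : n → α} (hx : ∀ i, x i ≠ 0) :
    (diagonal x)⁻¹ = diagonal fun i => (x i)⁻¹ :=
  inv_eq_right_inv <| by simp [diagonal_mul_diagonal, hx]

theorem permMatrix_mem_unitaryGroup [CommRing α] [StarRing α] (σ : Equiv.Perm n) :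
    σ.permMatrix α ∈ unitaryGroup n α := by
  rw [mem_unitaryGroup_iff, star_eq_conjTranspose, conjTranspose_permMatrix, ← permMatrix_mul,
    inv_mul_cancel, permMatrix_one]

theorem diagonal_comp_perm [Semiring α] [StarRing α] (σ : Equiv.Perm n) (x : n → α) :
    diagonal (x ∘ σ) = σ.permMatrix α * diagonal x * star (σ.permMatrix α) := by
  rw [star_eq_conjTranspose, conjTranspose_permMatrix]
  ext i j
  rw [mul_assoc, PEquiv.toMatrix_toPEquiv_mul, PEquiv.mul_toMatrix_toPEquiv]
  simp [diagonal_apply, Equiv.Perm.inv_def]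

end Conjugation

section Davis

variable {n : Type*} [Fintype n] [DecidableEq n] {Φ : Matrix n n ℝ → ℝ} {s : Set (n → ℝ)}

theorem mem_and_le_apply_mulVec_of_mem_doublyStochastic {φ : (n → ℝ) → ℝ} {D : Matrix n n ℝ}
    {x : n → ℝ} (hφ : ConcaveOn ℝ s φ) (hs : ∀ σ : Equiv.Perm n, ∀ x ∈ s, x ∘ σ ∈ s)
    (hφs : ∀ σ : Equiv.Perm n, ∀ x ∈ s, φ (x ∘ σ) = φ x) (hD : D ∈ doublyStochastic ℝ n)
    (hx : x ∈ s) : D *ᵥ x ∈ s ∧ φ x ≤ φ (D *ᵥ x) := by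
  have hconvex : Convex ℝ {M : Matrix n n ℝ | M *ᵥ x ∈ s ∧ φ x ≤ φ (M *ᵥ x)} :=
    (hφ.convex_ge (φ x)).linear_preimage ((Matrix.mulVecBilin ℝ ℝ).flip x)
  rw [← SetLike.mem_coe, doublyStochastic_eq_convexHull_permMatrix] at hD
  refine convexHull_min ?_ hconvex hD
  rintro _ ⟨σ, rfl⟩
  rw [Set.mem_ofPred_eq, permMatrix_mulVec]
  exact ⟨hs σ x hx, (hφs σ x hx).ge⟩

theorem sq_apply_mem_doublyStochastic {U : Matrix n n ℝ} (hU : U ∈ unitaryGroup n ℝ) :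
    (of fun i j => U i j ^ 2) ∈ doublyStochastic ℝ n := by
  refine mem_doublyStochastic_iff_sum.2 ⟨fun i j => sq_nonneg _, fun i => ?_, fun j => ?_⟩
  · simpa [mul_apply, sq] using congr_fun₂ (mem_unitaryGroup_iff.1 hU) i i
  · simpa [mul_apply, sq] using congr_fun₂ (mem_unitaryGroup_iff'.1 hU) j j

theorem diag_mul_diagonal_mul_star (U : Matrix n n ℝ) (d : n → ℝ) :
    (U * diagonal d * star U).diag = (of fun i j => U i j ^ 2) *ᵥ d := by
  ext i
  rw [diag_apply, mul_apply]
  simp only [mul_diagonal, star_apply, star_trivial, mulVec, dotProduct, of_apply]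
  exact Finset.sum_congr rfl fun j _ => by ring

theorem exists_mem_unitaryGroup_eq_mul_diagonal_mul_star {X : Matrix n n ℝ} (hX : X.IsHermitian) :
    ∃ V ∈ unitaryGroup n ℝ, X = V * diagonal hX.eigenvalues * star V := by
  refine ⟨hX.eigenvectorUnitary, hX.eigenvectorUnitary.2, ?_⟩
  simpa [Unitary.conjStarAlgAut_apply, Function.comp_def] using hX.spectral_theorem

theorem exists_mem_unitaryGroup_diagonal_eigenvalues_eq {X : Matrix n n ℝ} (hX : X.IsHermitian) :
    ∃ U ∈ unitaryGroup n ℝ, diagonal hX.eigenvalues = U * X * star U := by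
  refine ⟨_, (star hX.eigenvectorUnitary).2, ?_⟩
  simpa [Unitary.conjStarAlgAut_apply, Function.comp_def] using
    hX.conjStarAlgAut_star_eigenvectorUnitary.symm

theorem diag_mem_and_le_apply_diagonal_diag
    (hΦ : ∀ U ∈ unitaryGroup n ℝ, ∀ X, Φ (U * X * star U) = Φ X)
    (hs : ∀ σ : Equiv.Perm n, ∀ x ∈ s, x ∘ σ ∈ s) (hconc : ConcaveOn ℝ s fun x => Φ (diagonal x))
    {X U : Matrix n n ℝ} (hX : X.IsHermitian) (hXs : hX.eigenvalues ∈ s)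
    (hU : U ∈ unitaryGroup n ℝ) :
    (U * X * star U).diag ∈ s ∧ Φ X ≤ Φ (diagonal (U * X * star U).diag) := by
  obtain ⟨V, hV, hXV⟩ := exists_mem_unitaryGroup_eq_mul_diagonal_mul_star hX
  have hdiag : (U * X * star U).diag = (of fun i j => (U * V) i j ^ 2) *ᵥ hX.eigenvalues := by
    rw [← diag_mul_diagonal_mul_star]
    nth_rw 1 [hXV]
    simp only [star_mul, mul_assoc]
  have hΦX : Φ X = Φ (diagonal hX.eigenvalues) := by
    nth_rw 1 [hXV]
    exact hΦ V hV _
  rw [hdiag, hΦX]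
  exact mem_and_le_apply_mulVec_of_mem_doublyStochastic hconc hs
    (fun σ x _ => by rw [diagonal_comp_perm, hΦ _ (permMatrix_mem_unitaryGroup σ)])
    (sq_apply_mem_doublyStochastic (mul_mem hU hV)) hXs

theorem concaveOn_setOf_eigenvalues_mem
    (hΦ : ∀ U ∈ unitaryGroup n ℝ, ∀ X, Φ (U * X * star U) = Φ X)
    (hs : ∀ σ : Equiv.Perm n, ∀ x ∈ s, x ∘ σ ∈ s) (hconc : ConcaveOn ℝ s fun x => Φ (diagonal x)) :
    ConcaveOn ℝ {X : Matrix n n ℝ | ∃ hX : X.IsHermitian, hX.eigenvalues ∈ s} Φ := by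
  have hcombo {X Y : Matrix n n ℝ} {a b : ℝ} (hX : X.IsHermitian) (hXs : hX.eigenvalues ∈ s)
      (hY : Y.IsHermitian) (hYs : hY.eigenvalues ∈ s) (ha : 0 ≤ a) (hb : 0 ≤ b) (hab : a + b = 1)
      (hZ : (a • X + b • Y).IsHermitian) :
      hZ.eigenvalues ∈ s ∧ a • Φ X + b • Φ Y ≤ Φ (a • X + b • Y) := by
    obtain ⟨U, hU, hdiagonal⟩ := exists_mem_unitaryGroup_diagonal_eigenvalues_eq hZ
    obtain ⟨hUX, hΦX⟩ := diag_mem_and_le_apply_diagonal_diag hΦ hs hconc hX hXs hU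
    obtain ⟨hUY, hΦY⟩ := diag_mem_and_le_apply_diagonal_diag hΦ hs hconc hY hYs hU
    have heig : hZ.eigenvalues = a • (U * X * star U).diag + b • (U * Y * star U).diag := by
      rw [← diag_diagonal hZ.eigenvalues, hdiagonal]
      simp [mul_add, add_mul]
    refine ⟨heig ▸ hconc.1 hUX hUY ha hb hab, ?_⟩
    calc a • Φ X + b • Φ Y
        ≤ a • Φ (diagonal (U * X * star U).diag) + b • Φ (diagonal (U * Y * star U).diag) := by
          gcongr
      _ ≤ Φ (diagonal (a • (U * X * star U).diag + b • (U * Y * star U).diag)) :=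
          hconc.2 hUX hUY ha hb hab
      _ = Φ (a • X + b • Y) := by rw [← heig, hdiagonal, hΦ U hU]
  have hherm {X Y : Matrix n n ℝ} {a b : ℝ} (hX : X.IsHermitian) (hY : Y.IsHermitian) :
      (a • X + b • Y).IsHermitian :=
    (hX.smul (.all a)).add (hY.smul (.all b))
  exact ⟨fun X ⟨hX, hXs⟩ Y ⟨hY, hYs⟩ a b ha hb hab =>
      ⟨hherm hX hY, (hcombo hX hXs hY hYs ha hb hab _).1⟩,
    fun X ⟨hX, hXs⟩ Y ⟨hY, hYs⟩ a b ha hb hab =>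
      (hcombo hX hXs hY hYs ha hb hab (hherm hX hY)).2⟩

theorem concaveOn_posDef (hΦ : ∀ U ∈ unitaryGroup n ℝ, ∀ X, Φ (U * X * star U) = Φ X)
    (hconc : ConcaveOn ℝ {x : n → ℝ | ∀ i, 0 < x i} fun x => Φ (diagonal x)) :
    ConcaveOn ℝ {X : Matrix n n ℝ | X.PosDef} Φ := by
  have hset : {X : Matrix n n ℝ | X.PosDef} =
      {X | ∃ hX : X.IsHermitian, hX.eigenvalues ∈ {x : n → ℝ | ∀ i, 0 < x i}} := by
    ext X
    exact ⟨fun hX => ⟨hX.isHermitian, hX.eigenvalues_pos⟩,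
      fun ⟨hX, hpos⟩ => hX.posDef_iff_eigenvalues_pos.2 hpos⟩
  rw [hset]
  exact concaveOn_setOf_eigenvalues_mem hΦ (fun σ x hx i => hx (σ i)) hconc

end Davis

section PosDef

open scoped ComplexOrder

theorem eventually_posDef_sub_smul {n : Type*} [Finite n] {P B : Matrix n n ℝ} (hP : P.PosDef)
    (hB : B.IsHermitian) : ∀ᶠ t : ℝ in 𝓝 0, (P - t • B).PosDef := by
  have := Fintype.ofFinite n
  have hcont : Continuous fun z : ℝ × (n → ℝ) => z.2 ⬝ᵥ (P - z.1 • B) *ᵥ z.2 := by fun_prop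
  have hsphere : ∀ᶠ t : ℝ in 𝓝 0, ∀ x ∈ Metric.sphere (0 : n → ℝ) 1,
      0 < x ⬝ᵥ (P - t • B) *ᵥ x := by
    refine (isCompact_sphere 0 1).eventually_forall_of_forall_eventually fun x hx => ?_
    refine hcont.continuousAt.eventually_const_lt ?_
    have hx0 : x ≠ 0 := ne_zero_of_mem_unit_sphere ⟨x, hx⟩
    simpa using hP.dotProduct_mulVec_pos hx0
  filter_upwards [hsphere] with t ht
  refine .of_dotProduct_mulVec_pos (hP.isHermitian.sub (hB.smul (.all t))) fun x hx => ?_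
  have hx' := ht (‖x‖⁻¹ • x) (by simp [norm_smul, hx])
  have hnorm : 0 < ‖x‖⁻¹ := by positivity
  simpa [mulVec_smul, hnorm] using hx'

variable {n 𝕜 : Type*} [Fintype n] [RCLike 𝕜]

theorem posDef_mul_of_commute {P Q : Matrix n n 𝕜} (hP : P.PosDef) (hQ : Q.PosDef)
    (hPQ : Commute P Q) : (P * Q).PosDef := by
  classical
  open scoped MatrixOrder in
  rw [← isStrictlyPositive_iff_posDef] at *
  exact (hP.commute_iff hQ).1 hPQ

variable [DecidableEq n]

theorem exists_isUnit_eq_star_mul_self_of_posDef {P : Matrix n n 𝕜} (hP : P.PosDef) :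
    ∃ R : Matrix n n 𝕜, IsUnit R ∧ P = star R * R := by
  open scoped MatrixOrder in
  obtain ⟨R, hR⟩ := CStarAlgebra.nonneg_iff_eq_star_mul_self.1 hP.posSemidef.nonneg
  exact ⟨R, isUnit_of_mul_isUnit_right (hR ▸ hP.isUnit), hR⟩

theorem posDef_mul_of_diagonalizable {g A S : Matrix n n ℝ} {κ : n → ℝ} (hg : g.PosDef)
    (hgA : g * A = Aᵀ * g) (hS : IsUnit S) (hdiag : S⁻¹ * A * S = diagonal κ)
    (hκ : ∀ i, 0 < κ i) : (g * A).PosDef := by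
  have hdet : IsUnit S.det := (isUnit_iff_isUnit_det S).1 hS
  have hAS : A * S = S * diagonal κ := by
    rw [← hdiag, ← mul_assoc, ← mul_assoc, mul_nonsing_inv _ hdet, one_mul]
  have hSA : star S * Aᵀ = diagonal κ * star S := by
    simpa [star_eq_conjTranspose] using congr_arg star hAS
  have hcomm : Commute (star S * g * S) (diagonal κ) := by
    calc star S * g * S * diagonal κ = star S * (g * A) * S := by simp only [mul_assoc, hAS]
      _ = diagonal κ * (star S * g * S) := by rw [hgA, ← mul_assoc, hSA]; simp only [mul_assoc]
  have hprod := posDef_mul_of_commute (hS.posDef_star_left_conjugate_iff.2 hg)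
    (PosDef.diagonal hκ) hcomm
  rwa [mul_assoc, ← hAS, ← mul_assoc, mul_assoc (star S),
    hS.posDef_star_left_conjugate_iff] at hprod

theorem conjTranspose_inv_mul_eq_mul_inv {α : Type*} [CommRing α] [StarRing α] {g A : Matrix n n α}
    (hA : IsUnit A) (hg : g.IsHermitian) (hgA : (g * A).IsHermitian) : A⁻¹ᴴ * g = g * A⁻¹ := by
  have hdet : IsUnit A.det := (isUnit_iff_isUnit_det A).1 hA
  have hAg : Aᴴ * g = g * A := by rw [← hgA.eq, conjTranspose_mul, hg.eq]
  calc A⁻¹ᴴ * g = A⁻¹ᴴ * (g * A) * A⁻¹ := by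
        rw [mul_assoc, mul_nonsing_inv_cancel_right _ _ hdet]
    _ = g * A⁻¹ := by
        rw [← hAg, ← mul_assoc, ← conjTranspose_mul, mul_nonsing_inv _ hdet, conjTranspose_one,
          one_mul]

theorem isHermitian_mul_inv_mul_mul_inv {α : Type*} [CommRing α] [StarRing α]
    {g A η : Matrix n n α} (hA : IsUnit A) (hg : g.IsHermitian) (hgA : (g * A).IsHermitian)
    (hgη : (g * η).IsHermitian) : (g * (A⁻¹ * η * A⁻¹)).IsHermitian := by
  have hconj := isHermitian_conjTranspose_mul_mul A⁻¹ hgη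
  rwa [← mul_assoc, conjTranspose_inv_mul_eq_mul_inv hA hg hgA, mul_assoc g, mul_assoc g] at hconj

theorem posDef_mul_inv {g A : Matrix n n 𝕜} (hg : g.IsHermitian) (hgA : (g * A).PosDef) :
    (g * A⁻¹).PosDef := by
  have hA : IsUnit A := isUnit_of_mul_isUnit_right hgA.isUnit
  have hconj := (isUnit_nonsing_inv_iff.2 hA).posDef_star_left_conjugate_iff.2 hgA
  rwa [← mul_assoc, star_eq_conjTranspose,
    conjTranspose_inv_mul_eq_mul_inv hA hg hgA.isHermitian,
    nonsing_inv_mul_cancel_right _ _ ((isUnit_iff_isUnit_det A).1 hA)] at hconj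

theorem concaveOn_posDef_mul {Φ : Matrix n n ℝ → ℝ} (hΦ : ∀ ⦃X Y⦄, IsConj X Y → Φ X = Φ Y)
    (hconc : ConcaveOn ℝ {x : n → ℝ | ∀ i, 0 < x i} fun x => Φ (diagonal x)) {g : Matrix n n ℝ}
    (hg : g.PosDef) : ConcaveOn ℝ {X | (g * X).PosDef} Φ := by
  obtain ⟨R, hR, rfl⟩ := exists_isUnit_eq_star_mul_self_of_posDef hg
  have hdet : IsUnit R.det := (isUnit_iff_isUnit_det R).1 hR
  have hdavis : ConcaveOn ℝ {X : Matrix n n ℝ | X.PosDef} Φ :=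
    concaveOn_posDef (fun U hU X => (hΦ <| isConj_mul_mul_of_mul_eq_one
      (mem_unitaryGroup_iff.1 hU) (mem_unitaryGroup_iff'.1 hU) X).symm) hconc
  have hconj (X : Matrix n n ℝ) : star R⁻¹ * (star R * R * X) * R⁻¹ = R * X * R⁻¹ := by
    rw [← mul_assoc, ← mul_assoc, ← star_mul, mul_nonsing_inv _ hdet, star_one, one_mul]
  have hset : LinearMap.mulLeftRight ℝ (R, R⁻¹) ⁻¹' {X | X.PosDef} =
      {X | (star R * R * X).PosDef} := by
    ext X
    rw [Set.mem_preimage, LinearMap.mulLeftRight_apply, ← hconj]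
    exact (isUnit_nonsing_inv_iff.2 hR).posDef_star_left_conjugate_iff
  have hcomp : Φ ∘ LinearMap.mulLeftRight ℝ (R, R⁻¹) = Φ :=
    funext fun X => (hΦ <| isConj_mul_mul_of_mul_eq_one (mul_nonsing_inv R hdet)
      (nonsing_inv_mul R hdet) X).symm
  simpa only [hset, hcomp] using hdavis.comp_linearMap (LinearMap.mulLeftRight ℝ (R, R⁻¹))

end PosDef

section OperatorFunction

-- `(g * A).PosDef` says that `A` is `g`-selfadjoint with positive eigenvalues.
theorem two_mul_inv_mul_sq_fderiv_le_of_posDef_mul {n : Type*} [Fintype n] [DecidableEq n]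
    {F : Matrix n n ℝ → ℝ} {g A η : Matrix n n ℝ} (hFconj : ∀ ⦃X Y⦄, IsConj X Y → F X = F Y)
    (hFconc : ConcaveOn ℝ {x : n → ℝ | ∀ i, 0 < x i} fun x => (F (diagonal fun i => (x i)⁻¹))⁻¹)
    (hg : g.PosDef) (hgA : (g * A).PosDef) (hgη : (g * η).IsHermitian)
    (hF : ContDiffAt ℝ 2 F A) (hFA : F A ≠ 0) :
    2 * (F A)⁻¹ * fderiv ℝ F A η ^ 2 ≤
      fderiv ℝ (fderiv ℝ F) A η η + 2 * fderiv ℝ F A (η * A⁻¹ * η) := by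
  have hA : IsUnit A := isUnit_of_mul_isUnit_right hgA.isUnit
  have hconc : ConcaveOn ℝ {X | (g * X).PosDef} fun X => (F X⁻¹)⁻¹ := by
    refine concaveOn_posDef_mul (fun X Y hXY => ?_) (hFconc.congr fun x hx => ?_) hg
    · rw [hFconj (isConj_matrix_inv hXY)]
    · simp only [inv_diagonal_of_forall_ne_zero fun i => (hx i).ne']
  refine two_mul_inv_mul_sq_fderiv_le_of_concaveOn_inv_comp_inv hA hF hFA ?_
    (concaveOn_comp_sub_smul hconc A⁻¹ (A⁻¹ * η * A⁻¹))
  filter_upwards [eventually_posDef_sub_smul (posDef_mul_inv hg.isHermitian hgA)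
    (isHermitian_mul_inv_mul_mul_inv hA hg.isHermitian hgA.isHermitian hgη)] with t ht
  simpa only [Set.mem_ofPred_eq, mul_sub, Matrix.mul_smul] using ht

theorem contDiff_matrix_pow {𝕜 n : Type*} [NontriviallyNormedField 𝕜] [Fintype n] [DecidableEq n]
    {N : WithTop ℕ∞} (k : ℕ) : ContDiff 𝕜 N fun X : Matrix n n 𝕜 => X ^ k := by
  induction k with
  | zero => simpa only [pow_zero] using contDiff_const
  | succ k ih =>
    refine contDiff_pi.2 fun i => contDiff_pi.2 fun j => ?_
    simp only [pow_succ, mul_apply]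
    exact ContDiff.sum fun l _ =>
      (contDiff_pi.1 (contDiff_pi.1 ih i) l).mul (contDiff_apply_apply 𝕜 𝕜 l j)

theorem contDiff_Pvec (n m : ℕ) {N : WithTop ℕ∞} : ContDiff ℝ N (Pvec n m) := by
  refine contDiff_pi.2 fun l => ?_
  simp only [Pvec, trace, diag_apply]
  exact ContDiff.sum fun i _ => contDiff_pi.1 (contDiff_pi.1 (contDiff_matrix_pow _) i) i

theorem Pvec_eq_of_isConj {n : ℕ} (m : ℕ) {X Y : Matrix (Fin n) (Fin n) ℝ} (h : IsConj X Y) :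
    Pvec n m X = Pvec n m Y := by
  funext l
  obtain ⟨c, hc⟩ := h.pow ((l : ℕ) + 1)
  rw [Pvec, Pvec, c.eq_mul_inv_iff_mul_eq.2 hc.symm, trace_units_conj]

theorem Pvec_diagonal (n m : ℕ) (κ : Fin n → ℝ) : Pvec n m (diagonal κ) = pvec n m κ := by
  funext l
  simp [Pvec, pvec, diagonal_pow, trace_diagonal]

theorem stmt_16_general {n m : ℕ} {ψ : (Fin m → ℝ) → ℝ}
    {A S g η : Matrix (Fin n) (Fin n) ℝ} {κ : Fin n → ℝ}
    (hψ : ContDiffAt ℝ 2 ψ (pvec n m κ)) (hψκ : ψ (pvec n m κ) ≠ 0)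
    (hinvconc : ConcaveOn ℝ {κ : Fin n → ℝ | ∀ i, 0 < κ i}
      (fun κ : Fin n → ℝ => (ψ (pvec n m fun i => (κ i)⁻¹))⁻¹))
    (hκ : ∀ i, 0 < κ i) (hS : IsUnit S) (hdiag : S⁻¹ * A * S = diagonal κ) (hg : g.PosDef)
    (hsa : g * A = Aᵀ * g) (hη : g * η = ηᵀ * g) :
    2 * (ψ (Pvec n m A))⁻¹ * fderiv ℝ (fun X => ψ (Pvec n m X)) A η ^ 2 ≤
      fderiv ℝ (fderiv ℝ fun X => ψ (Pvec n m X)) A η η +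
        2 * fderiv ℝ (fun X => ψ (Pvec n m X)) A (η * A⁻¹ * η) := by
  have hSdet : IsUnit S.det := (isUnit_iff_isUnit_det S).1 hS
  have hPA : Pvec n m A = pvec n m κ := by
    rw [← Pvec_diagonal, ← hdiag]
    exact Pvec_eq_of_isConj m
      (isConj_mul_mul_of_mul_eq_one (nonsing_inv_mul S hSdet) (mul_nonsing_inv S hSdet) A)
  have hgη : (g * η).IsHermitian := by
    rw [IsHermitian, conjTranspose_mul, hg.isHermitian.eq, conjTranspose_eq_transpose_of_trivial,
      hη]
  refine two_mul_inv_mul_sq_fderiv_le_of_posDef_mul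
    (fun X Y hXY => congr_arg ψ (Pvec_eq_of_isConj m hXY)) ?_ hg
    (posDef_mul_of_diagonalizable hg hsa hS hdiag hκ) hgη ?_ (hPA ▸ hψκ)
  · simpa only [Pvec_diagonal] using hinvconc
  · exact ContDiffAt.comp A (hPA ▸ hψ) (contDiff_Pvec n m).contDiffAt

end OperatorFunction

/-- Let `Γ₊ = {κ | ∀ i, κ i > 0}`, `ψ` of class `C²` on the open
`U ⊆ ℝ^m` with `(p₁(κ),…,p_m(κ)) ∈ U` for all `κ ∈ Γ₊`, and suppose
`f(κ) = ψ(p₁(κ),…,p_m(κ))` is positive, strictly monotone, homogeneous of degree one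
and inverse concave on `Γ₊` (i.e. `κ ↦ (f (κ₁⁻¹, …, κₙ⁻¹))⁻¹` is concave on `Γ₊`). If
`A` is diagonalisable with eigenvalues `κ ∈ Γ₊` and `g`-selfadjoint for a symmetric
positive definite `g`, then for every `g`-selfadjoint `η`,
`d²F(A)(η,η) + 2 dF(A)(η A⁻¹ η) ≥ 2 F(A)⁻¹ (dF(A)η)²`. -/
theorem stmt_16 (n m : ℕ) (U : Set (Fin m → ℝ)) (hU : IsOpen U)
    (ψ : (Fin m → ℝ) → ℝ) (hψ : ContDiffOn ℝ 2 ψ U)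
    (hΓU : ∀ κ : Fin n → ℝ, (∀ i, 0 < κ i) → pvec n m κ ∈ U)
    (hpos : ∀ κ : Fin n → ℝ, (∀ i, 0 < κ i) → 0 < ψ (pvec n m κ))
    (hmono : ∀ κ : Fin n → ℝ, (∀ i, 0 < κ i) → ∀ i : Fin n,
      0 < fderiv ℝ (fun x : Fin n → ℝ => ψ (pvec n m x)) κ (Pi.single i 1))
    (hhom : ∀ (lam : ℝ), 0 < lam → ∀ κ : Fin n → ℝ, (∀ i, 0 < κ i) →
      ψ (pvec n m (lam • κ)) = lam * ψ (pvec n m κ))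
    (hinvconc : ConcaveOn ℝ {κ : Fin n → ℝ | ∀ i, 0 < κ i}
      (fun κ : Fin n → ℝ => (ψ (pvec n m fun i => (κ i)⁻¹))⁻¹))
    (A : Matrix (Fin n) (Fin n) ℝ) (κ : Fin n → ℝ) (hκ : ∀ i, 0 < κ i)
    (S : Matrix (Fin n) (Fin n) ℝ) (hS : IsUnit S)
    (hdiag : S⁻¹ * A * S = Matrix.diagonal κ)
    (g : Matrix (Fin n) (Fin n) ℝ) (hg : g.PosDef) (hgsym : g.IsSymm)
    (hsa : g * A = Aᵀ * g) :
    ∀ η : Matrix (Fin n) (Fin n) ℝ, g * η = ηᵀ * g →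
      fderiv ℝ (fderiv ℝ (fun X : Matrix (Fin n) (Fin n) ℝ => ψ (Pvec n m X))) A η η
          + 2 * fderiv ℝ (fun X : Matrix (Fin n) (Fin n) ℝ => ψ (Pvec n m X)) A
              (η * A⁻¹ * η)
        ≥ 2 * (ψ (Pvec n m A))⁻¹
            * (fderiv ℝ (fun X : Matrix (Fin n) (Fin n) ℝ => ψ (Pvec n m X)) A η) ^ 2 := by
  intro η hη
  exact stmt_16_general (hψ.contDiffAt (hU.mem_nhds (hΓU κ hκ))) (hpos κ hκ).ne' hinvconc hκ hS
    hdiag hg hsa hη
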